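/- Let n ≥ 1 and let K be a smooth, strictly convex body in ℝ^{n+1} with positive support function h. Then for all w₁, w₂ ∈ ℝ^{n+1}: ∫_{S^n} ⟨x, w₁⟩·⟨∇h_K(x), w₂⟩·det(A(x)+x⊗x) dθ(x) = ((1/(n+1))·∫_{S^n} h(x)·det(A(x)+x⊗x) dθ)·⟨w₁, w₂⟩; that is, ∫ X ⊗ (x/h) dV = ((∫ dV)/(n+1))·Id. -/

import Mathlib

open MeasureTheory Metric Real
open scoped InnerProductSpace ENNReal Topology

noncomputable section

/-- Euclidean space `ℝ^{n+1}`. -/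
abbrev Eu (n : ℕ) : Type := EuclideanSpace ℝ (Fin (n + 1))

/-- The unit sphere `S^n ⊆ ℝ^{n+1}` as a subtype. -/
abbrev Sph (n : ℕ) : Type := Metric.sphere (0 : Eu n) 1

/-- The spherical Lebesgue (surface) measure on `S^n`. -/
def sphMeas (n : ℕ) : Measure (Sph n) := (volume : Measure (Eu n)).toSphere

/-- The support function of a set `K ⊆ ℝ^{n+1}`. -/
def sfn {n : ℕ} (K : Set (Eu n)) (z : Eu n) : ℝ :=
  sSup ((fun y => ⟪z, y⟫_ℝ) '' K)

/-- The Hessian endomorphism `A(x) = D(∇ h_K)(x)`. -/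
def hessA {n : ℕ} (K : Set (Eu n)) (x : Eu n) : Eu n →L[ℝ] Eu n :=
  fderiv ℝ (gradient (sfn K)) x

/-- The rank-one endomorphism `x ⊗ x : v ↦ ⟨v, x⟩ x`. -/
def tens {n : ℕ} (x : Eu n) : Eu n →L[ℝ] Eu n :=
  (innerSL ℝ x).smulRight x

/-- `det (A(x) + x ⊗ x)`, the reciprocal Gauss curvature `1/𝒦` at `x ∈ S^n`. -/
def rK {n : ℕ} (K : Set (Eu n)) (x : Eu n) : ℝ :=
  LinearMap.det ((hessA K x + tens x : Eu n →L[ℝ] Eu n) : Eu n →ₗ[ℝ] Eu n)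

/-- `K` is a smooth, strictly convex body with positive support function. -/
structure IsSmoothConvexBody {n : ℕ} (K : Set (Eu n)) : Prop where
  compact : IsCompact K
  convex : Convex ℝ K
  interior_nonempty : (interior K).Nonempty
  pos : ∀ x : Sph n, 0 < sfn K x
  smooth : ContDiffOn ℝ (⊤ : ℕ∞) (sfn K) {(0 : Eu n)}ᶜ
  posdef : ∀ x : Sph n, ∀ v : Eu n, v ≠ 0 →
    0 < ⟪(hessA K (x : Eu n) + tens (x : Eu n)) v, v⟫_ℝ

/-- The density `h·det(A + x⊗x)` of the measure `dV` with respect to `dθ`. -/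
def dens {n : ℕ} (K : Set (Eu n)) (x : Eu n) : ℝ := sfn K x * rK K x

/-- The centroid-type point `c(K) = (∫ ∇h_K dV)/(∫ dV)`. -/
def cK {n : ℕ} (K : Set (Eu n)) : Eu n :=
  (∫ x : Sph n, dens K x ∂sphMeas n)⁻¹ •
    ∫ x : Sph n, dens K x • gradient (sfn K) x ∂sphMeas n

/-- The support function of the translated body `K - c(K)`. -/
def tsfn {n : ℕ} (K : Set (Eu n)) (x : Eu n) : ℝ := sfn K x - ⟪x, cK K⟫_ℝ

/-!
The Jacobian determinant of a compactly supported `C¹` vector field integrates to zero. For `f`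
positively homogeneous of degree one, apply this to the field `G x = φ ‖x‖ (I + ‖x‖ w₁ ⊗ w₂) ∇f x`,
where `φ` is a bump function supported in `(0, ∞)`. Since `∇f` is homogeneous of degree zero,
`det (DG)` at `r θ` is `(φ / r) ^ (d - 1)` times `det (D(∇f) θ + θ ⊗ θ)` times
`φ' f (1 + r ⟪w₁, w₂⟫) + φ ⟪θ, w₁⟫ ⟪∇f, w₂⟫`. Integrating over `r`, by parts where `φ'` occurs,
leaves a multiple of `⟪θ, w₁⟫ ⟪∇f, w₂⟫ - f ⟪w₁, w₂⟫ / d` in place of the last factor, and the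
vanishing of the remaining integral over the sphere is the identity.
-/

section NullLagrangian

lemma image_eq_self_of_bijective {α : Type*} {F : α → α} (hF : F.Bijective) {s : Set α}
    (hs : ∀ x ∉ s, F x = x) : F '' s = s := by
  have hcompl : F '' sᶜ = sᶜ := (Set.image_congr hs).trans (Set.image_id' _)
  rwa [Set.image_compl_eq hF, compl_inj_iff] at hcompl

lemma bijective_id_add_of_lipschitzWith {E : Type*} [NormedAddCommGroup E] [NormedSpace ℝ E]
    [CompleteSpace E] {G : E → E} {k : NNReal} (hG : LipschitzWith k G) (hk : k < 1) :
    (fun x ↦ x + G x).Bijective := by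
  have happrox : ApproximatesLinearOn (fun x ↦ x + G x)
      ((ContinuousLinearEquiv.refl ℝ E : E ≃L[ℝ] E) : E →L[ℝ] E) Set.univ k := by
    rw [ApproximatesLinearOn.approximatesLinearOn_iff_lipschitzOnWith, lipschitzOnWith_univ]
    convert! hG using 1
    ext x
    simp
  have hsmall : Subsingleton E ∨
      k < ‖((ContinuousLinearEquiv.refl ℝ E).symm : E →L[ℝ] E)‖₊⁻¹ := by
    rcases subsingleton_or_nontrivial E with hE | hE
    · exact .inl hE
    · exact .inr (by simpa using hk)
  exact ⟨Set.injOn_univ.1 (happrox.injOn hsmall), happrox.surjective hsmall⟩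

lemma eventually_forall_norm_le_det_id_add_smul_pos {E : Type*} [NormedAddCommGroup E]
    [NormedSpace ℝ E] (C : ℝ) :
    ∀ᶠ t : ℝ in 𝓝 0, ∀ L : E →L[ℝ] E, ‖L‖ ≤ C → 0 < (.id ℝ E + t • L).det := by
  have hdet : ∀ᶠ M : E →L[ℝ] E in 𝓝 0, 0 < (.id ℝ E + M).det := by
    have hcont : Continuous fun M : E →L[ℝ] E ↦ (.id ℝ E + M).det :=
      ContinuousLinearMap.continuous_det.comp (by fun_prop)
    exact hcont.continuousAt.eventually (lt_mem_nhds (by simp [ContinuousLinearMap.det]))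
  obtain ⟨ε, hε, hball⟩ := Metric.eventually_nhds_iff.1 hdet
  have hlim : ∀ᶠ t : ℝ in 𝓝 0, |t| * C < ε :=
    ((continuous_abs.mul continuous_const).tendsto' 0 0 (by simp)).eventually_lt_const hε
  filter_upwards [hlim] with t ht L hL
  refine hball ?_
  rw [dist_zero_right, norm_smul]
  exact (mul_le_mul_of_nonneg_left hL (norm_nonneg t)).trans_lt ht

/-- Evaluation at `s` is a fixed linear combination of evaluations at `d + 1` large nodes. -/
lemma integral_eval_eq_eval_of_eventually {α : Type*} [MeasurableSpace α] {μ : Measure α}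
    {d : ℕ} {P : α → Polynomial ℝ} (hP : ∀ x, (P x).natDegree ≤ d)
    (hint : ∀ s, Integrable (fun x ↦ (P x).eval s) μ) {Q : Polynomial ℝ} (hQ : Q.natDegree ≤ d)
    (h : ∀ᶠ s in Filter.atTop, ∫ x, (P x).eval s ∂μ = Q.eval s) (s : ℝ) :
    ∫ x, (P x).eval s ∂μ = Q.eval s := by
  obtain ⟨N, hN⟩ := Filter.eventually_atTop.1 h
  let node : ℕ → ℝ := fun i ↦ N + i
  have hnode : Set.InjOn node (Finset.range (d + 1)) := fun i _ j _ hij ↦ by simpa [node] using hij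
  let weight : ℕ → ℝ := fun i ↦ (Lagrange.basis (Finset.range (d + 1)) node i).eval s
  have hlagrange (R : Polynomial ℝ) (hR : R.natDegree ≤ d) :
      R.eval s = ∑ i ∈ Finset.range (d + 1), R.eval (node i) * weight i := by
    have hdeg : R.degree < (Finset.range (d + 1)).card := by
      rw [Finset.card_range]
      exact R.degree_le_natDegree.trans_lt (by exact_mod_cast Nat.lt_succ_of_le hR)
    conv_lhs => rw [Lagrange.eq_interpolate hnode hdeg, Lagrange.interpolate_apply]
    simp [Polynomial.eval_finsetSum, weight]
  calc ∫ x, (P x).eval s ∂μ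
      = ∑ i ∈ Finset.range (d + 1), (∫ x, (P x).eval (node i) ∂μ) * weight i := by
        rw [integral_congr_ae (.of_forall fun x ↦ hlagrange (P x) (hP x))]
        rw [integral_finsetSum _ fun i _ ↦ (hint (node i)).mul_const (weight i)]
        simp_rw [integral_mul_const]
    _ = Q.eval s := by
        rw [hlagrange Q hQ]
        exact Finset.sum_congr rfl fun i _ ↦ by rw [hN (node i) (by simp [node])]

variable {E : Type*} [NormedAddCommGroup E] [NormedSpace ℝ E] {G : E → E}

lemma continuous_det_smul_id_add_fderiv (hG : ContDiff ℝ 1 G) (s : ℝ) :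
    Continuous fun x ↦ (s • .id ℝ E + fderiv ℝ G x).det :=
  ContinuousLinearMap.continuous_det.comp
    (continuous_const.add (hG.continuous_fderiv one_ne_zero))

lemma hasCompactSupport_det_fderiv [FiniteDimensional ℝ E] [Nontrivial E]
    (hc : HasCompactSupport G) : HasCompactSupport fun x ↦ (fderiv ℝ G x).det :=
  (hc.fderiv ℝ).comp_left (g := ContinuousLinearMap.det) (by simp [ContinuousLinearMap.det])

variable [FiniteDimensional ℝ E] [MeasurableSpace E] [BorelSpace E] {μ : Measure E}
  [μ.IsAddHaarMeasure]

lemma eventually_setIntegral_det_id_add_smul_fderiv (hG : ContDiff ℝ 1 G)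
    (hc : HasCompactSupport G) :
    ∀ᶠ t : ℝ in 𝓝 0, ∫ x in tsupport G, (.id ℝ E + t • fderiv ℝ G x).det ∂μ =
      μ.real (tsupport G) := by
  obtain ⟨C, hC⟩ := hG.lipschitzWith_of_hasCompactSupport hc one_ne_zero
  have hsmall : ∀ᶠ t : ℝ in 𝓝 0, ‖t‖₊ * C < 1 :=
    ((continuous_nnnorm.mul continuous_const).tendsto' 0 0 (by simp)).eventually_lt_const one_pos
  filter_upwards [hsmall, eventually_forall_norm_le_det_id_add_smul_pos (E := E) C] with t ht hpos
  have hbij : (fun x ↦ x + t • G x).Bijective :=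
    bijective_id_add_of_lipschitzWith ((lipschitzWith_smul t).comp hC) ht
  have himage : (fun x ↦ x + t • G x) '' tsupport G = tsupport G :=
    image_eq_self_of_bijective hbij fun x hx ↦ by simp [image_eq_zero_of_notMem_tsupport hx]
  have hderiv (x : E) : HasFDerivAt (fun x ↦ x + t • G x) (.id ℝ E + t • fderiv ℝ G x) x :=
    (hasFDerivAt_id x).add ((hG.differentiable one_ne_zero x).hasFDerivAt.const_smul t)
  have hcov := integral_image_eq_integral_abs_det_fderiv_smul μ (isClosed_tsupport G).measurableSet
    (fun x _ ↦ (hderiv x).hasFDerivWithinAt) hbij.injective.injOn (fun _ ↦ (1 : ℝ))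
  simp_rw [abs_of_pos (hpos _ (norm_fderiv_le_of_lipschitz ℝ hC))] at hcov
  simpa [himage] using hcov.symm

/-- For large `s`, `s⁻¹ • (s • id + G)` is a diffeomorphism mapping the support of `G` onto itself,
so `∫ det (s • id + DG)` over this support is `s ^ d` times its volume; being polynomial in `s`,
the identity persists at `s = 0`. -/
theorem integral_det_fderiv_eq_zero [Nontrivial E] (hG : ContDiff ℝ 1 G)
    (hc : HasCompactSupport G) : ∫ x, (fderiv ℝ G x).det ∂μ = 0 := by
  let d := Module.finrank ℝ E
  let P (x : E) : Polynomial ℝ := LinearMap.charpoly (-(fderiv ℝ G x : E →ₗ[ℝ] E))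
  have hPeval (x : E) (s : ℝ) : (P x).eval s = (s • .id ℝ E + fderiv ℝ G x).det := by
    rw [LinearMap.eval_charpoly, sub_neg_eq_add, Algebra.algebraMap_eq_smul_one]
    rfl
  have hlarge : ∀ᶠ s : ℝ in Filter.atTop, ∫ x in tsupport G, (P x).eval s ∂μ =
      (Polynomial.C (μ.real (tsupport G)) * Polynomial.X ^ d).eval s := by
    filter_upwards [tendsto_inv_atTop_zero.eventually
        (eventually_setIntegral_det_id_add_smul_fderiv (μ := μ) hG hc),
      Filter.eventually_gt_atTop 0] with s hs hpos
    have hscale (x : E) :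
        (P x).eval s = s ^ d * (.id ℝ E + s⁻¹ • fderiv ℝ G x : E →L[ℝ] E).det := by
      rw [hPeval, ContinuousLinearMap.det, ContinuousLinearMap.det, ← LinearMap.det_smul]
      congr 1
      ext v
      simp [smul_smul, hpos.ne']
    rw [integral_congr_ae (.of_forall hscale), integral_const_mul, hs, mul_comm]
    simp
  have hzero := integral_eval_eq_eval_of_eventually
    (fun x ↦ (LinearMap.charpoly_natDegree _).le)
    (fun s ↦ by
      simp_rw [hPeval]
      exact (continuous_det_smul_id_add_fderiv hG s).continuousOn.integrableOn_compact hc)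
    (Polynomial.natDegree_C_mul_X_pow_le _ d) hlarge 0
  have hd : d ≠ 0 := Module.finrank_pos.ne'
  simp_rw [hPeval, zero_smul, zero_add] at hzero
  rw [setIntegral_eq_integral_of_forall_compl_eq_zero fun x hx ↦ ?_] at hzero
  · simpa [hd] using hzero
  · rw [image_eq_zero_of_notMem_tsupport fun h ↦ hx (tsupport_fderiv_subset ℝ h)]
    simp [ContinuousLinearMap.det]

end NullLagrangian

section Homogeneous

/-- Positive homogeneity of integer degree `k`. Nothing is required at `c = 0`, so that negative
degrees make sense. -/
def PosHomogeneous {E F : Type*} [AddCommGroup E] [Module ℝ E] [AddCommGroup F] [Module ℝ F]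
    (k : ℤ) (f : E → F) : Prop :=
  ∀ ⦃c : ℝ⦄, 0 < c → ∀ x, f (c • x) = c ^ k • f x

namespace PosHomogeneous

variable {E F : Type*} [NormedAddCommGroup E] [NormedSpace ℝ E] [NormedAddCommGroup F]
  [NormedSpace ℝ F] {k : ℤ} {f : E → F}

lemma fderiv (hf : PosHomogeneous k f) : PosHomogeneous (k - 1) (fderiv ℝ f) := by
  intro c hc x
  have hscale : c • _root_.fderiv ℝ f (c • x) = c ^ k • _root_.fderiv ℝ f x := by
    rw [← fderiv_comp_smul, funext (hf hc)]
    exact congrFun (fderiv_const_smul_field (c ^ k)) x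
  rw [zpow_sub_one₀ hc.ne', mul_comm, mul_smul, ← hscale, inv_smul_smul₀ hc.ne']

lemma fderiv_apply_self (hf : PosHomogeneous k f) {x : E} (hx : DifferentiableAt ℝ f x) :
    _root_.fderiv ℝ f x x = (k : ℝ) • f x := by
  have hray : HasDerivAt (fun c : ℝ ↦ f (c • x)) (_root_.fderiv ℝ f x x) 1 := by
    have hline : HasDerivAt (fun c : ℝ ↦ c • x) x 1 := by
      simpa using (hasDerivAt_id (1 : ℝ)).smul_const x
    exact HasFDerivAt.comp_hasDerivAt (1 : ℝ) (by simpa using hx.hasFDerivAt) hline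
  have hpow : HasDerivAt (fun c : ℝ ↦ c ^ k • f x) ((k : ℝ) • f x) 1 := by
    simpa using (hasDerivAt_zpow k (1 : ℝ) (.inl one_ne_zero)).smul_const (f x)
  refine hray.unique (hpow.congr_of_eventuallyEq ?_)
  filter_upwards [lt_mem_nhds one_pos] with c hc using hf hc x

end PosHomogeneous

end Homogeneous

section SupportFunction

variable {E : Type*} [NormedAddCommGroup E] [InnerProductSpace ℝ E] [CompleteSpace E]
  {f : E → ℝ} {x : E}

lemma PosHomogeneous.gradient {k : ℤ} (hf : PosHomogeneous k f) :
    PosHomogeneous (k - 1) (gradient f) := fun c hc x ↦ by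
  simp [_root_.gradient, hf.fderiv hc x]

lemma contDiffAt_gradient {m n : WithTop ℕ∞} (hf : ContDiffAt ℝ n f x) (hmn : m + 1 ≤ n) :
    ContDiffAt ℝ m (gradient f) x :=
  (InnerProductSpace.toDual ℝ E).symm.contDiff.contDiffAt.comp x (hf.fderiv_right hmn)

lemma contDiffOn_gradient {s : Set E} {m n : WithTop ℕ∞} (hs : IsOpen s)
    (hf : ContDiffOn ℝ n f s) (hmn : m + 1 ≤ n) : ContDiffOn ℝ m (gradient f) s :=
  fun _ hx ↦ (contDiffAt_gradient (hf.contDiffAt (hs.mem_nhds hx)) hmn).contDiffWithinAt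

lemma inner_gradient_self (hom : PosHomogeneous 1 f) (hx : DifferentiableAt ℝ f x) :
    ⟪x, gradient f x⟫_ℝ = f x := by
  simpa [inner_gradient_right] using hom.fderiv_apply_self hx

/-- Differentiating Euler's identity `f = ⟪x, ∇f⟫` leaves `⟪x, D(∇f) v⟫ = 0`. -/
lemma inner_fderiv_gradient (hom : PosHomogeneous 1 f) (hf : ContDiffAt ℝ 2 f x) (v : E) :
    ⟪x, fderiv ℝ (gradient f) x v⟫_ℝ = 0 := by
  have hdiff : DifferentiableAt ℝ (gradient f) x :=
    (contDiffAt_gradient (m := 1) hf le_rfl).differentiableAt one_ne_zero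
  have hEuler : (fun y ↦ ⟪y, gradient f y⟫_ℝ) =ᶠ[𝓝 x] f := by
    filter_upwards [hf.eventually (by simp)] with y hy
    exact inner_gradient_self hom (hy.differentiableAt two_ne_zero)
  have hderiv := DFunLike.congr_fun (hEuler.fderiv_eq (𝕜 := ℝ)) v
  rw [fderiv_inner_apply ℝ differentiableAt_fun_id hdiff] at hderiv
  simpa [inner_gradient_right] using hderiv

end SupportFunction

lemma det_one_add_smulRight_add_smulRight {R M : Type*} [CommRing R] [AddCommGroup M]
    [Module R M] [Module.Free R M] [Module.Finite R M] (f g : Module.Dual R M) (u v : M) :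
    LinearMap.det (1 + f.smulRight u + g.smulRight v) =
      (1 + f u) * (1 + g v) - f v * g u := by
  nontriviality R
  let b := Module.Free.chooseBasis R M
  let U : Matrix (Module.Free.ChooseBasisIndex R M) (Fin 2) R := .of fun i j ↦ b.repr (![u, v] j) i
  let V : Matrix (Fin 2) (Module.Free.ChooseBasisIndex R M) R := .of fun j i ↦ ![f, g] j (b i)
  have hUV : LinearMap.toMatrix b b (1 + f.smulRight u + g.smulRight v) = 1 + U * V := by
    ext i j
    simp [LinearMap.toMatrix_apply, Matrix.mul_apply, U, V, Matrix.one_apply,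
      Finsupp.single_apply, eq_comm, mul_comm, add_assoc]
  have hVU (j k : Fin 2) : (V * U) j k = ![f, g] j (![u, v] k) := by
    conv_rhs => rw [← b.sum_repr (![u, v] k), map_sum]
    simp [Matrix.mul_apply, U, V, mul_comm]
  rw [← LinearMap.det_toMatrix b, hUV, Matrix.det_one_add_mul_comm, Matrix.det_fin_two]
  simp only [Matrix.add_apply, hVU]
  simp

section RadialField

open InnerProductSpace (rankOne)

variable {E : Type*} [NormedAddCommGroup E] [InnerProductSpace ℝ E]

lemma hasFDerivAt_norm {x : E} (hx : x ≠ 0) : HasFDerivAt (‖·‖) (‖x‖⁻¹ • innerSL ℝ x) x := by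
  have hsqrt := (hasStrictFDerivAt_norm_sq x).hasFDerivAt.sqrt (by simpa using hx)
  simp only [Real.sqrt_sq (norm_nonneg _)] at hsqrt
  convert! hsqrt using 1
  module

lemma det_smul_id_add_rankOne_add_rankOne [FiniteDimensional ℝ E] {c : ℝ} (hc : c ≠ 0)
    (u₁ v₁ u₂ v₂ : E) :
    c ^ 2 * (c • .id ℝ E + rankOne ℝ u₁ v₁ + rankOne ℝ u₂ v₂ : E →L[ℝ] E).det =
      c ^ Module.finrank ℝ E *
        ((c + ⟪v₁, u₁⟫_ℝ) * (c + ⟪v₂, u₂⟫_ℝ) - ⟪v₁, u₂⟫_ℝ * ⟪v₂, u₁⟫_ℝ) := by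
  have hfactor : ((c • .id ℝ E + rankOne ℝ u₁ v₁ + rankOne ℝ u₂ v₂ : E →L[ℝ] E) : E →ₗ[ℝ] E) =
      c • (1 + (innerₛₗ ℝ v₁).smulRight (c⁻¹ • u₁) + (innerₛₗ ℝ v₂).smulRight (c⁻¹ • u₂)) := by
    ext y
    simp [smul_smul, mul_left_comm c, hc]
  rw [ContinuousLinearMap.det, hfactor, LinearMap.det_smul,
    det_one_add_smulRight_add_smulRight]
  simp only [innerₛₗ_apply_apply, real_inner_smul_right]
  field_simp

/-- The field `φ(‖x‖) (I + ‖x‖ w₁ ⊗ w₂) ∇f`, whose Jacobian determinant is to be integrated. -/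
def radialField [CompleteSpace E] (φ : ℝ → ℝ) (f : E → ℝ) (w₁ w₂ x : E) : E :=
  φ ‖x‖ • (gradient f x + (‖x‖ * ⟪gradient f x, w₂⟫_ℝ) • w₁)

/-- The endomorphism `D(∇f)(x) + x ⊗ x`; for `f` the support function of a convex body and `x` a
unit vector, its determinant is the reciprocal Gauss curvature. -/
def curvatureMap [CompleteSpace E] (f : E → ℝ) (x : E) : E →L[ℝ] E :=
  fderiv ℝ (gradient f) x + rankOne ℝ x x

variable [CompleteSpace E] {f : E → ℝ} {φ : ℝ → ℝ} {θ w₁ w₂ : E} {r : ℝ}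

lemma contDiff_radialField (hf : ContDiffOn ℝ 2 f {0}ᶜ) (hφ : ContDiff ℝ 1 φ)
    (hsupp : tsupport φ ⊆ Set.Ioi 0) : ContDiff ℝ 1 (radialField φ f w₁ w₂) := by
  refine contDiff_iff_contDiffAt.2 fun x ↦ ?_
  rcases eq_or_ne x 0 with rfl | hx
  · have hφ0 : φ =ᶠ[𝓝 ‖(0 : E)‖] 0 :=
      notMem_tsupport_iff_eventuallyEq.1 fun h ↦ (hsupp h).ne' norm_zero
    refine (contDiffAt_const (c := (0 : E))).congr_of_eventuallyEq ?_
    filter_upwards [continuous_norm.continuousAt.eventually hφ0] with y hy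
    simp [radialField, hy]
  · have hnorm : ContDiffAt ℝ 1 (‖·‖) x := contDiffAt_norm ℝ hx
    have hgrad : ContDiffAt ℝ 1 (gradient f) x :=
      contDiffAt_gradient (hf.contDiffAt (isOpen_compl_singleton.mem_nhds hx)) le_rfl
    exact (hφ.contDiffAt.comp x hnorm).smul
      (hgrad.add ((hnorm.mul (hgrad.inner ℝ contDiffAt_const)).smul contDiffAt_const))

lemma continuousOn_det_curvatureMap (hf : ContDiffOn ℝ 2 f {0}ᶜ) :
    ContinuousOn (fun x ↦ (curvatureMap f x).det) {0}ᶜ := by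
  have hrank : Continuous fun x : E ↦ rankOne ℝ x x :=
    (rankOne ℝ).continuous.clm_apply continuous_id
  exact ContinuousLinearMap.continuous_det.comp_continuousOn
    (((contDiffOn_gradient isOpen_compl_singleton hf le_rfl).continuousOn_fderiv_of_isOpen
      isOpen_compl_singleton le_rfl).add hrank.continuousOn)

lemma fderiv_radialField_apply (hom : PosHomogeneous 1 f) (hf : ContDiffAt ℝ 2 f (r • θ))
    (hφ : DifferentiableAt ℝ φ r) (hr : 0 < r) (hθ : ‖θ‖ = 1) (v : E) :
    fderiv ℝ (radialField φ f w₁ w₂) (r • θ) v =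
      (deriv φ r * ⟪θ, v⟫_ℝ) • (gradient f θ + (r * ⟪gradient f θ, w₂⟫_ℝ) • w₁) +
      φ r • (r⁻¹ • fderiv ℝ (gradient f) θ v +
        (⟪θ, v⟫_ℝ * ⟪gradient f θ, w₂⟫_ℝ + ⟪fderiv ℝ (gradient f) θ v, w₂⟫_ℝ) • w₁) := by
  have hrθ : ‖r • θ‖ = r := by rw [norm_smul, hθ, mul_one, Real.norm_of_nonneg hr.le]
  have hgrad : gradient f (r • θ) = gradient f θ := by simpa using hom.gradient hr θ
  have hnorm : HasFDerivAt (‖·‖) (innerSL ℝ θ) (r • θ) := by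
    convert! hasFDerivAt_norm (x := r • θ) (norm_pos_iff.1 (hrθ.symm ▸ hr)) using 1
    rw [hrθ, map_smul, inv_smul_smul₀ hr.ne']
  have hHess : HasFDerivAt (gradient f) (r⁻¹ • fderiv ℝ (gradient f) θ) (r • θ) := by
    convert! ((contDiffAt_gradient (m := 1) hf le_rfl).differentiableAt one_ne_zero).hasFDerivAt
      using 1
    simpa using (hom.gradient.fderiv hr θ).symm
  have hinner := hHess.inner ℝ (hasFDerivAt_const w₂ (r • θ))
  have hφnorm := (hrθ.symm ▸ hφ.hasDerivAt).comp_hasFDerivAt (r • θ) hnorm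
  have hfield : HasFDerivAt (radialField φ f w₁ w₂) _ (r • θ) :=
    hφnorm.smul (hHess.add ((hnorm.mul hinner).smul_const w₁))
  rw [hfield.fderiv]
  simp only [hgrad, hrθ, add_apply, smul_apply,
    ContinuousLinearMap.smulRight_apply, ContinuousLinearMap.comp_apply,
    ContinuousLinearMap.prod_apply, fderivInnerCLM_apply, innerSL_apply_apply,
    zero_apply, inner_zero_right, real_inner_smul_left, zero_add, Function.comp_apply, smul_eq_mul,
    mul_inv_cancel_left₀ hr.ne']
  module

lemma fderiv_radialField (hom : PosHomogeneous 1 f) (hf : ContDiffOn ℝ 2 f {0}ᶜ)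
    (hφ : DifferentiableAt ℝ φ r) (hr : 0 < r) (hθ : ‖θ‖ = 1) :
    fderiv ℝ (radialField φ f w₁ w₂) (r • θ) =
      ((φ r / r) • .id ℝ E + rankOne ℝ (deriv φ r • gradient f θ - (φ r / r) • θ) θ +
        rankOne ℝ w₁ (((φ r + r * deriv φ r) * ⟪gradient f θ, w₂⟫_ℝ) • θ +
          φ r • (w₂ - ⟪θ, w₂⟫_ℝ • θ))) ∘L curvatureMap f θ := by
  have hsmooth {x : E} (hx : x ≠ 0) : ContDiffAt ℝ 2 f x :=
    hf.contDiffAt (isOpen_compl_singleton.mem_nhds hx)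
  have hθ0 : θ ≠ 0 := norm_ne_zero_iff.1 (hθ ▸ one_ne_zero)
  ext v
  have hA : fderiv ℝ (gradient f) θ v = curvatureMap f θ v - ⟪θ, v⟫_ℝ • θ := by
    simp [curvatureMap]
  have hinner : ⟪θ, v⟫_ℝ = ⟪θ, curvatureMap f θ v⟫_ℝ := by
    simp [curvatureMap, inner_add_right, inner_fderiv_gradient hom (hsmooth hθ0),
      real_inner_smul_right, hθ]
  rw [fderiv_radialField_apply hom (hsmooth (smul_ne_zero hr.ne' hθ0)) hφ hr hθ, hA, hinner]
  simp only [ContinuousLinearMap.comp_apply, add_apply,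
    smul_apply, ContinuousLinearMap.id_apply, InnerProductSpace.rankOne_apply,
    inner_add_left, inner_sub_left, inner_sub_right, real_inner_smul_left, real_inner_smul_right,
    real_inner_comm w₂]
  module

end RadialField

section Polar

variable {E : Type*} [NormedAddCommGroup E] [NormedSpace ℝ E] [FiniteDimensional ℝ E]
  [Nontrivial E] [MeasurableSpace E] [BorelSpace E] {μ : Measure E} [μ.IsAddHaarMeasure]
  {F : Type*} [NormedAddCommGroup F] [NormedSpace ℝ F]

lemma integral_volumeIoiPow (n : ℕ) (g : ℝ → F) :
    ∫ r, g r ∂Measure.volumeIoiPow n = ∫ r in Set.Ioi (0 : ℝ), r ^ n • g r := by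
  simp only [Measure.volumeIoiPow, ENNReal.ofReal]
  rw [integral_withDensity_eq_integral_smul
      (measurable_subtype_coe.pow_const _).real_toNNReal,
    integral_subtype_comap measurableSet_Ioi fun r ↦ Real.toNNReal (r ^ n) • g r]
  refine setIntegral_congr_fun measurableSet_Ioi fun r hr ↦ ?_
  simp only [NNReal.smul_def, Real.coe_toNNReal _ (pow_nonneg (Set.mem_Ioi.1 hr).le _)]

lemma integral_eq_integral_sphere_integral_Ioi {g : E → F} (hg : Integrable g μ) :
    ∫ x, g x ∂μ = ∫ θ : sphere (0 : E) 1,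
      (∫ r in Set.Ioi (0 : ℝ), r ^ (Module.finrank ℝ E - 1) • g (r • θ)) ∂μ.toSphere := by
  have hpolar := μ.measurePreserving_homeomorphUnitSphereProd
  have hemb := (homeomorphUnitSphereProd E).measurableEmbedding
  let gPolar (p : sphere (0 : E) 1 × Set.Ioi (0 : ℝ)) : F := g ((p.2 : ℝ) • (p.1 : E))
  have hgPolar (x : ({0}ᶜ : Set E)) : gPolar (homeomorphUnitSphereProd E x) = g x := by
    simp [gPolar, smul_smul, norm_ne_zero_iff.2 x.2]
  have hint : Integrable gPolar
      (μ.toSphere.prod (Measure.volumeIoiPow (Module.finrank ℝ E - 1))) := by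
    rw [← hpolar.integrable_comp_emb hemb, show gPolar ∘ _ = g ∘ (↑) from funext hgPolar,
      ← integrableOn_iff_comap_subtypeVal (measurableSet_singleton _).compl]
    exact hg.integrableOn
  calc ∫ x, g x ∂μ
      = ∫ x : ({0}ᶜ : Set E), gPolar (homeomorphUnitSphereProd E x) ∂μ.comap (↑) := by
        simp_rw [hgPolar]
        rw [integral_subtype_comap (measurableSet_singleton _).compl g, restrict_compl_singleton]
    _ = ∫ p, gPolar p ∂μ.toSphere.prod (Measure.volumeIoiPow (Module.finrank ℝ E - 1)) :=
        hpolar.integral_comp hemb gPolar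
    _ = _ := by
        rw [integral_prod _ hint]
        exact integral_congr_ae (.of_forall fun θ ↦ integral_volumeIoiPow _ fun r ↦ g (r • θ))

end Polar

section RadialIntegral

lemma integral_one_add_mul_pow_mul_deriv {φ : ℝ → ℝ} (hφ : ContDiff ℝ 1 φ)
    (hc : HasCompactSupport φ) (n : ℕ) (a : ℝ) :
    ∫ r, (1 + r * a) * (φ r ^ n * deriv φ r) = -(a / (n + 1)) * ∫ r, φ r ^ (n + 1) := by
  have hpow (r : ℝ) : HasDerivAt (fun r ↦ φ r ^ (n + 1) / (n + 1)) (φ r ^ n * deriv φ r) r := by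
    convert! (((hφ.differentiable one_ne_zero r).hasDerivAt.pow (n + 1)).div_const
      ((n : ℝ) + 1)) using 1
    field_simp
    push_cast [Nat.add_sub_cancel]
    ring
  have hlin (r : ℝ) : HasDerivAt (fun r ↦ 1 + r * a) a r := by
    simpa using ((hasDerivAt_id r).mul_const a).const_add 1
  have hφc := hφ.continuous
  have : Continuous (deriv φ) := hφ.continuous_deriv le_rfl
  have hcpow : HasCompactSupport fun r ↦ φ r ^ (n + 1) / (n + 1) :=
    hc.mono fun r hr hφr ↦ hr (by simp [hφr])
  have hparts : ∫ r, (1 + r * a) * (φ r ^ n * deriv φ r) = -∫ r, a * (φ r ^ (n + 1) / (n + 1)) := by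
    refine integral_mul_deriv_eq_deriv_mul_of_integrable (fun r _ ↦ hlin r) (fun r _ ↦ hpow r)
      ?_ ?_ ?_ <;> refine Continuous.integrable_of_hasCompactSupport (by fun_prop) ?_
    · exact hc.deriv.mul_left.mul_left
    · exact hcpow.mul_left
    · exact hcpow.mul_left
  rw [integral_const_mul, integral_div] at hparts
  rw [hparts]
  ring

end RadialIntegral

section Divergence

variable {E : Type*} [NormedAddCommGroup E] [InnerProductSpace ℝ E] [FiniteDimensional ℝ E]
  {f : E → ℝ} {φ : ℝ → ℝ} {w₁ w₂ : E}

lemma det_fderiv_radialField [Nontrivial E] {θ : E} {r : ℝ} (hom : PosHomogeneous 1 f)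
    (hf : ContDiffOn ℝ 2 f {0}ᶜ) (hφ : DifferentiableAt ℝ φ r) (hφ0 : ∀ s, 0 ≤ φ s) (hr : 0 < r)
    (hθ : ‖θ‖ = 1) :
    (fderiv ℝ (radialField φ f w₁ w₂) (r • θ)).det =
      (φ r / r) ^ (Module.finrank ℝ E - 1) * (curvatureMap f θ).det *
        (deriv φ r * f θ * (1 + r * ⟪w₁, w₂⟫_ℝ) + φ r * (⟪θ, w₁⟫_ℝ * ⟪gradient f θ, w₂⟫_ℝ)) := by
  have hfθ : DifferentiableAt ℝ f θ :=
    (hf.contDiffAt (isOpen_compl_singleton.mem_nhds (norm_ne_zero_iff.1 (hθ ▸ one_ne_zero)))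
      ).differentiableAt two_ne_zero
  rcases eq_or_ne (φ r) 0 with hφr | hφr
  · have hderiv : deriv φ r = 0 :=
      IsLocalMin.deriv_eq_zero (.of_forall fun s ↦ hφr.trans_le (hφ0 s))
    rw [fderiv_radialField hom hf hφ hr hθ, hφr, hderiv]
    simp [ContinuousLinearMap.det]
  · have hc : φ r / r ≠ 0 := div_ne_zero hφr hr.ne'
    have hdet := det_smul_id_add_rankOne_add_rankOne hc
      (deriv φ r • gradient f θ - (φ r / r) • θ) θ w₁
      (((φ r + r * deriv φ r) * ⟪gradient f θ, w₂⟫_ℝ) • θ + φ r • (w₂ - ⟪θ, w₂⟫_ℝ • θ))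
    have hself : ⟪θ, θ⟫_ℝ = 1 := by rw [real_inner_self_eq_norm_sq, hθ, one_pow]
    simp only [inner_add_left, inner_sub_left, inner_sub_right, real_inner_smul_left,
      real_inner_smul_right, inner_gradient_self hom hfθ, hself, real_inner_comm θ] at hdet
    have hcomp (S T : E →L[ℝ] E) : (S ∘L T).det = S.det * T.det := LinearMap.det_comp _ _
    refine mul_left_cancel₀ (pow_ne_zero 2 hc) ?_
    rw [fderiv_radialField hom hf hφ hr hθ, hcomp, ← mul_assoc, hdet,
      ← Nat.sub_add_cancel (Module.finrank_pos (R := ℝ) (M := E)), Nat.add_sub_cancel, pow_succ]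
    rw [real_inner_comm w₁ w₂, real_inner_comm (gradient f θ) w₂]
    field_simp
    ring

lemma hasCompactSupport_radialField (hc : HasCompactSupport φ) :
    HasCompactSupport (radialField φ f w₁ w₂) := by
  obtain ⟨R, hR⟩ := hc.isCompact.isBounded.subset_closedBall 0
  refine .of_support_subset_isCompact (isCompact_closedBall (0 : E) R) fun x hx ↦ ?_
  have hφx : φ ‖x‖ ≠ 0 := fun h ↦ hx (by simp [radialField, h])
  simpa using hR (subset_tsupport φ hφx)

lemma integral_Ioi_pow_smul_det_fderiv_radialField [Nontrivial E] (hom : PosHomogeneous 1 f)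
    (hf : ContDiffOn ℝ 2 f {0}ᶜ) (hφ : ContDiff ℝ 1 φ) (hc : HasCompactSupport φ)
    (hsupp : tsupport φ ⊆ Set.Ioi 0) (hφ0 : ∀ r, 0 ≤ φ r) {θ : E} (hθ : ‖θ‖ = 1) :
    ∫ r in Set.Ioi (0 : ℝ),
        r ^ (Module.finrank ℝ E - 1) • (fderiv ℝ (radialField φ f w₁ w₂) (r • θ)).det =
      (∫ r, φ r ^ Module.finrank ℝ E) * ((curvatureMap f θ).det *
        (⟪θ, w₁⟫_ℝ * ⟪gradient f θ, w₂⟫_ℝ - f θ * ⟪w₁, w₂⟫_ℝ / Module.finrank ℝ E)) := by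
  obtain ⟨n, hn⟩ : ∃ n, Module.finrank ℝ E = n + 1 :=
    Nat.exists_eq_add_one.2 Module.finrank_pos
  have hφc := hφ.continuous
  have : Continuous (deriv φ) := hφ.continuous_deriv le_rfl
  let radial (r : ℝ) : ℝ :=
    (curvatureMap f θ).det * f θ * ((1 + r * ⟪w₁, w₂⟫_ℝ) * (φ r ^ n * deriv φ r)) +
      (curvatureMap f θ).det * (⟪θ, w₁⟫_ℝ * ⟪gradient f θ, w₂⟫_ℝ) * φ r ^ (n + 1)
  calc ∫ r in Set.Ioi (0 : ℝ),
        r ^ (Module.finrank ℝ E - 1) • (fderiv ℝ (radialField φ f w₁ w₂) (r • θ)).det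
      = ∫ r in Set.Ioi (0 : ℝ), radial r := by
        refine setIntegral_congr_fun measurableSet_Ioi fun r hr ↦ ?_
        have hr' : r ≠ 0 := (Set.mem_Ioi.1 hr).ne'
        simp only [det_fderiv_radialField hom hf (hφ.differentiable one_ne_zero r) hφ0 hr hθ,
          hn, Nat.add_sub_cancel, div_pow, smul_eq_mul, radial]
        field_simp
        ring
    _ = ∫ r, radial r := by
        refine setIntegral_eq_integral_of_forall_compl_eq_zero fun r hr ↦ ?_
        have hr' := fun h ↦ hr (hsupp h)
        simp [radial, image_eq_zero_of_notMem_tsupport hr',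
          image_eq_zero_of_notMem_tsupport fun h ↦ hr' (tsupport_deriv_subset h)]
    _ = _ := by
        rw [integral_add, integral_const_mul, integral_const_mul,
          integral_one_add_mul_pow_mul_deriv hφ hc, hn]
        · push_cast
          ring
        · exact Continuous.integrable_of_hasCompactSupport (by fun_prop)
            hc.deriv.mul_left.mul_left.mul_left
        · exact Continuous.integrable_of_hasCompactSupport (by fun_prop)
            (hc.mono fun r hr hφr ↦ hr (by simp [hφr]))

variable [Nontrivial E] [MeasurableSpace E] [BorelSpace E] (μ : Measure E) [μ.IsAddHaarMeasure]

lemma integral_sphere_det_curvatureMap_mul_sub_eq_zero (hom : PosHomogeneous 1 f)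
    (hf : ContDiffOn ℝ 2 f {0}ᶜ) (w₁ w₂ : E) :
    ∫ θ : sphere (0 : E) 1, (curvatureMap f θ).det * (⟪(θ : E), w₁⟫_ℝ * ⟪gradient f θ, w₂⟫_ℝ -
      f θ * ⟪w₁, w₂⟫_ℝ / Module.finrank ℝ E) ∂μ.toSphere = 0 := by
  obtain ⟨φ, hsupp, hc, hφ, hrange, hφ1⟩ :=
    exists_contDiff_tsupport_subset (n := 1) (Ioi_mem_nhds (zero_lt_one' ℝ))
  have hφ0 (r : ℝ) : 0 ≤ φ r := (hrange ⟨r, rfl⟩).1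
  have hpos : 0 < ∫ r, φ r ^ Module.finrank ℝ E :=
    (hφ.continuous.pow _).integral_pos_of_hasCompactSupport_nonneg_nonzero (x := 1)
      (hc.mono fun r hr hφr ↦ hr (by simp [hφr, Module.finrank_pos.ne']))
      (fun r ↦ pow_nonneg (hφ0 r) _) (by simp [hφ1])
  have hsmooth := contDiff_radialField (w₁ := w₁) (w₂ := w₂) hf hφ hsupp
  have hcompact := hasCompactSupport_radialField (f := f) (w₁ := w₁) (w₂ := w₂) hc
  have hint : Integrable (fun x ↦ (fderiv ℝ (radialField φ f w₁ w₂) x).det) μ :=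
    Continuous.integrable_of_hasCompactSupport
      (ContinuousLinearMap.continuous_det.comp (hsmooth.continuous_fderiv one_ne_zero))
      (hasCompactSupport_det_fderiv hcompact)
  have hzero := integral_det_fderiv_eq_zero (μ := μ) hsmooth hcompact
  rw [integral_eq_integral_sphere_integral_Ioi hint, integral_congr_ae (.of_forall fun θ ↦
      integral_Ioi_pow_smul_det_fderiv_radialField hom hf hφ hc hsupp hφ0
        (norm_eq_of_mem_sphere θ)), integral_const_mul] at hzero
  exact (mul_eq_zero.1 hzero).resolve_left hpos.ne'

theorem divergence_identity_general (hom : PosHomogeneous 1 f) (hf : ContDiffOn ℝ 2 f {0}ᶜ)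
    (w₁ w₂ : E) :
    ∫ θ : sphere (0 : E) 1, ⟪(θ : E), w₁⟫_ℝ * ⟪gradient f θ, w₂⟫_ℝ *
        (curvatureMap f θ).det ∂μ.toSphere =
      (1 / (Module.finrank ℝ E : ℝ) * ∫ θ : sphere (0 : E) 1,
        f θ * (curvatureMap f θ).det ∂μ.toSphere) * ⟪w₁, w₂⟫_ℝ := by
  have hf0 (θ : sphere (0 : E) 1) : (θ : E) ∈ ({0}ᶜ : Set E) := ne_zero_of_mem_unit_sphere θ
  have hfc : Continuous fun θ : sphere (0 : E) 1 ↦ f θ :=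
    hf.continuousOn.comp_continuous continuous_subtype_val hf0
  have hgrad : Continuous fun θ : sphere (0 : E) 1 ↦ gradient f θ :=
    (contDiffOn_gradient (m := 1) isOpen_compl_singleton hf le_rfl).continuousOn.comp_continuous
      continuous_subtype_val hf0
  have hdet : Continuous fun θ : sphere (0 : E) 1 ↦ (curvatureMap f θ).det :=
    (continuousOn_det_curvatureMap hf).comp_continuous continuous_subtype_val hf0
  have hint {g : sphere (0 : E) 1 → ℝ} (hg : Continuous g) : Integrable g μ.toSphere :=
    hg.integrable_of_hasCompactSupport (.of_compactSpace g)
  have hleft : Continuous fun θ : sphere (0 : E) 1 ↦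
      ⟪(θ : E), w₁⟫_ℝ * ⟪gradient f θ, w₂⟫_ℝ * (curvatureMap f θ).det :=
    ((continuous_subtype_val.inner continuous_const).mul (hgrad.inner continuous_const)).mul hdet
  have hright : Continuous fun θ : sphere (0 : E) 1 ↦
      1 / (Module.finrank ℝ E : ℝ) * (f θ * (curvatureMap f θ).det) * ⟪w₁, w₂⟫_ℝ :=
    ((hfc.mul hdet).const_mul _).mul_const _
  rw [← sub_eq_zero, ← integral_sphere_det_curvatureMap_mul_sub_eq_zero μ hom hf w₁ w₂,
    ← integral_const_mul, ← integral_mul_const, ← integral_sub (hint hleft) (hint hright)]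
  congr! 2
  ring

end Divergence

lemma posHomogeneous_sfn {n : ℕ} (K : Set (Eu n)) : PosHomogeneous 1 (sfn K) := fun c hc z ↦ by
  rw [zpow_one, sfn, sfn, ← Real.sSup_smul_of_nonneg hc.le, ← Set.image_smul, Set.image_image]
  simp only [real_inner_smul_left, smul_eq_mul]

/-- `∫ X ⊗ (x/h) dV = ((∫ dV)/(n+1)) Id`, i.e. for all `w₁, w₂`:
`∫ ⟨x,w₁⟩ ⟨∇h_K(x),w₂⟩ det(A+x⊗x) dθ = ((1/(n+1)) ∫ h det(A+x⊗x) dθ) ⟨w₁,w₂⟩`. -/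
theorem divergence_identity (n : ℕ) (hn : 1 ≤ n)
    (K : Set (Eu n)) (hK : IsSmoothConvexBody K) :
    ∀ w₁ w₂ : Eu n,
      ∫ x : Sph n, ⟪(x : Eu n), w₁⟫_ℝ * ⟪gradient (sfn K) (x : Eu n), w₂⟫_ℝ *
          rK K (x : Eu n) ∂sphMeas n =
        (1 / ((n : ℝ) + 1) * ∫ x : Sph n, dens K (x : Eu n) ∂sphMeas n) * ⟪w₁, w₂⟫_ℝ := by
  intro w₁ w₂
  have h := divergence_identity_general volume (posHomogeneous_sfn K)
    (contDiffOn_infty.1 hK.smooth 2) w₁ w₂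
  rw [finrank_euclideanSpace_fin, Nat.cast_add_one] at h
  exact h
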